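/- arXiv:2503.22636 — 3 statements merged into one kernel-verified Lean document; each statement's English description precedes it below -/
import Mathlib

section
/- Let Σ be a rational fan in N_ℝ and let f_1,…,f_k, g_1,…,g_ℓ be integral piecewise-linear functions on Σ. Then the equality of functions ∑_{i=1}^k e^{f_i} = ∑_{j=1}^ℓ e^{g_j} on |Σ| holds if and only if for every point v ∈ |Σ| there is an equality of multisets {f_1(v),…,f_k(v)} = {g_1(v),…,g_ℓ(v)}. In particular this forces k = ℓ. -/
open scoped BigOperators Pointwise

namespace EhrhartFormalization

/-- The ambient real vector space `N_ℝ ≅ ℝⁿ`, with lattice `N = ℤⁿ`. -/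
abbrev V (n : ℕ) : Type := Fin n → ℝ

/-- The real point associated to a lattice point. -/
def toR {n : ℕ} (u : Fin n → ℤ) : V n := fun i => (u i : ℝ)

/-- The pairing of an integral linear functional `m ∈ M` with a point of `N_ℝ`. -/
def pairR {n : ℕ} (m : Fin n → ℤ) (v : V n) : ℝ := ∑ i, (m i : ℝ) * v i

/-- The pairing of an integral linear functional with a lattice point. -/
def pairZ {n : ℕ} (m u : Fin n → ℤ) : ℤ := ∑ i, m i * u i

/-- A rational cone: a finite intersection of closed rational halfspaces. -/
def IsRationalCone {n : ℕ} (σ : Set (V n)) : Prop :=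
  ∃ s : Finset (Fin n → ℤ), σ = {v | ∀ m ∈ s, 0 ≤ pairR m v}

/-- `τ` is a face of `σ`: it is cut out by an integral linear functional that is
nonpositive on `σ`. -/
def IsFaceOf {n : ℕ} (τ σ : Set (V n)) : Prop :=
  ∃ m : Fin n → ℤ, (∀ v ∈ σ, pairR m v ≤ 0) ∧ τ = {v ∈ σ | pairR m v = 0}

/-- A rational fan in `N_ℝ`. -/
structure RationalFan (n : ℕ) where
  cones : Set (Set (V n))
  finite : cones.Finite
  rational : ∀ σ ∈ cones, IsRationalCone σ
  face_mem : ∀ σ ∈ cones, ∀ τ : Set (V n), IsFaceOf τ σ → τ ∈ cones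
  inter_face : ∀ σ₁ ∈ cones, ∀ σ₂ ∈ cones, IsFaceOf (σ₁ ∩ σ₂) σ₁

/-- The support of a fan: the union of its cones. -/
def RationalFan.support {n : ℕ} (S : RationalFan n) : Set (V n) := ⋃ σ ∈ S.cones, σ

/-- The dimension of a cone. -/
noncomputable def dimCone {n : ℕ} (σ : Set (V n)) : ℕ :=
  Module.finrank ℝ (Submodule.span ℝ σ)

/-- The set `Σ(k)` of `k`-dimensional cones of a fan. -/
def RationalFan.conesDim {n : ℕ} (S : RationalFan n) (k : ℕ) : Set (Set (V n)) :=
  {σ | σ ∈ S.cones ∧ dimCone σ = k}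

/-- The rays (`1`-dimensional cones) of a fan. -/
def RationalFan.rays {n : ℕ} (S : RationalFan n) : Set (Set (V n)) :=
  S.conesDim 1

/-- The dimension of a fan: the largest dimension of any of its cones. -/
noncomputable def RationalFan.dim {n : ℕ} (S : RationalFan n) : ℕ :=
  sSup (dimCone '' S.cones)

/-- `u` is the primitive ray generator of the ray `ρ`: the lattice point of `ρ`
generating `ρ ∩ N` as a monoid. -/
def IsRayGenOf {n : ℕ} (ρ : Set (V n)) (u : Fin n → ℤ) : Prop :=
  toR u ∈ ρ ∧ u ≠ 0 ∧ ∀ w : Fin n → ℤ, toR w ∈ ρ → ∃ c : ℕ, w = c • u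

open Classical in
/-- The primitive generator of a ray (junk value `0` if none exists). -/
noncomputable def rayGen {n : ℕ} (ρ : Set (V n)) : Fin n → ℤ :=
  if h : ∃ u, IsRayGenOf ρ u then h.choose else 0

/-- A unimodular cone: generated by part of a `ℤ`-basis of the lattice. -/
def IsUnimodularCone {n : ℕ} (σ : Set (V n)) : Prop :=
  ∃ (b : Module.Basis (Fin n) ℤ (Fin n → ℤ)) (k : ℕ), k ≤ n ∧
    σ = {v | ∃ c : Fin n → ℝ, (∀ i, 0 ≤ c i) ∧ (∀ i : Fin n, k ≤ (i : ℕ) → c i = 0) ∧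
          v = ∑ i, c i • toR (b i)}

/-- A unimodular fan: a pointed fan all of whose cones are unimodular. -/
def IsUnimodular {n : ℕ} (S : RationalFan n) : Prop :=
  ({0} : Set (V n)) ∈ S.cones ∧ ∀ σ ∈ S.cones, IsUnimodularCone σ

/-- A complete fan: its support is all of `N_ℝ`. -/
def IsComplete {n : ℕ} (S : RationalFan n) : Prop := S.support = Set.univ

/-- For a unimodular fan, `PL(Σ) = ℤ^{Σ(1)}`; this is the element of `PL(Σ)`
obtained by restricting an integral linear function `m ∈ M`, recorded by its
values at the primitive ray generators. -/
noncomputable def linPL {n : ℕ} (S : RationalFan n) (m : Fin n → ℤ) : ↥S.rays → ℤ :=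
  fun ρ => pairZ m (rayGen (ρ : Set (V n)))

open Classical in
/-- The Courant function of a ray: value `1` at `u_ρ₀` and `0` at other ray generators. -/
noncomputable def courant {n : ℕ} (S : RationalFan n) (ρ₀ : ↥S.rays) : ↥S.rays → ℤ :=
  fun ρ => if ρ = ρ₀ then 1 else 0

/-- The neighborhood `Σ^{(σ)}` of a cone: all cones contained in a cone containing `σ`. -/
def RationalFan.nbhd {n : ℕ} (S : RationalFan n) (σ : Set (V n)) : Set (Set (V n)) :=
  {τ | τ ∈ S.cones ∧ ∃ σ' ∈ S.cones, σ ⊆ σ' ∧ τ ⊆ σ'}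

/-- `T` is the star fan of `S` at the cone `σ`, realized via the lattice-compatible
surjection `π` whose kernel is the span of `σ`. -/
def IsStarMap {n m : ℕ} (S : RationalFan n) (σ : Set (V n)) (π : V n →ₗ[ℝ] V m)
    (T : RationalFan m) : Prop :=
  Function.Surjective π ∧
  (∀ u : Fin n → ℤ, ∃ w : Fin m → ℤ, π (toR u) = toR w) ∧
  (∀ w : Fin m → ℤ, ∃ u : Fin n → ℤ, π (toR u) = toR w) ∧
  LinearMap.ker π = Submodule.span ℝ σ ∧
  T.cones = (Set.image π) '' S.nbhd σ

/-- The recursive system of conditions defining Ehrhart fans: `χ` descends to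
`uPL(Σ) = PL(Σ)/L(Σ)`, is normalized by `χ(0) = 1`, and for every ray `ρ` there is a
star fan (with its own Ehrhart function `χT`, recursively) along which the Ehrhart
recursion `χ([f]) = χ([f - δ_ρ]) + χ_{Σ^ρ}([f]^ρ)` holds, where `[f]^ρ` is computed
by subtracting an integral linear function `m₀` agreeing with `f` on `ρ` and pushing
down to the star fan. -/
def EhrhartRec : (n : ℕ) → (S : RationalFan n) → ((↥S.rays → ℤ) → ℤ) → Prop
  | 0, S, χ =>
      (∀ (f : ↥S.rays → ℤ) (m : Fin 0 → ℤ), χ (f + linPL S m) = χ f) ∧ χ 0 = 1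
  | (n + 1), S, χ =>
      (∀ (f : ↥S.rays → ℤ) (m : Fin (n + 1) → ℤ), χ (f + linPL S m) = χ f) ∧ χ 0 = 1 ∧
      ∀ ρ : ↥S.rays, ∃ (π : V (n + 1) →ₗ[ℝ] V n) (T : RationalFan n)
          (χT : (↥T.rays → ℤ) → ℤ),
        IsStarMap S (ρ : Set (V (n + 1))) π T ∧ IsUnimodular T ∧ EhrhartRec n T χT ∧
        ∀ f : ↥S.rays → ℤ, ∃ (m₀ : Fin (n + 1) → ℤ) (g : ↥T.rays → ℤ),
          pairZ m₀ (rayGen (ρ : Set (V (n + 1)))) = f ρ ∧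
          (∀ (ρ' : ↥S.rays) (ρT : ↥T.rays),
              π '' (ρ' : Set (V (n + 1))) = (ρT : Set (V n)) →
              g ρT = f ρ' - pairZ m₀ (rayGen (ρ' : Set (V (n + 1))))) ∧
          χ f = χ (f - courant S ρ) + χT g

/-- A unimodular fan is Ehrhart if it admits an Ehrhart function satisfying the
Ehrhart recursion (together, recursively, with all of its star fans). -/
def IsEhrhart {n : ℕ} (S : RationalFan n) : Prop :=
  IsUnimodular S ∧ ∃ χ : (↥S.rays → ℤ) → ℤ, EhrhartRec n S χ

/-- An integral piecewise-linear function on a fan (recorded as a function on all of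
`N_ℝ`, constrained on each cone of the fan). -/
def IsPLFun {n : ℕ} (S : RationalFan n) (φ : V n → ℝ) : Prop :=
  ∀ σ ∈ S.cones, ∃ m : Fin n → ℤ, ∀ v ∈ σ, φ v = pairR m v

/-!
On each cone a piecewise-linear function is homogeneous, so along the points `d • v`, `d ∈ ℕ`, the
sum `∑ᵢ e^{fᵢ}` becomes the power sum `∑ᵢ xᵢ ^ d` of the numbers `xᵢ = e^{fᵢ(v)}`. The sequences
`d ↦ x ^ d` attached to distinct `x` are distinct characters of `ℕ`, hence linearly independent by
Dedekind, so the power sums determine the multiset of the `xᵢ`.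
-/

theorem multiset_eq_of_sum_map_eq {ι M : Type*} [AddCommMonoid M] {v : ι → M}
    (hv : LinearIndependent ℕ v) {s t : Multiset ι} (h : (s.map v).sum = (t.map v).sum) :
    s = t := by
  classical
  have linearCombination_toFinsupp (u : Multiset ι) :
      Finsupp.linearCombination ℕ v u.toFinsupp = (u.map v).sum := by
    induction u using Multiset.induction_on with
    | empty => simp
    | cons a u ih => simp [← Multiset.singleton_add, ih]
  apply Multiset.toFinsupp.injective
  apply hv
  rw [linearCombination_toFinsupp, linearCombination_toFinsupp, h]

section PowerSums

variable {R : Type*} [CommRing R] [IsDomain R]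

theorem linearIndependent_powers : LinearIndependent R fun (x : R) (d : ℕ) => x ^ d :=
  (linearIndependent_monoidHom (Multiplicative ℕ) R).comp (powersHom R) (powersHom R).injective

theorem multiset_eq_of_power_sums_eq [CharZero R] {s t : Multiset R}
    (h : ∀ d : ℕ, (s.map (· ^ d)).sum = (t.map (· ^ d)).sum) : s = t := by
  apply multiset_eq_of_sum_map_eq (linearIndependent_powers.restrict_scalars' ℕ)
  ext d
  simpa only [Pi.multiset_sum_apply, Multiset.map_map, Function.comp_def] using h d

end PowerSums

theorem multiset_eq_of_sum_exp_nsmul_eq {s t : Multiset ℝ}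
    (h : ∀ d : ℕ, (s.map fun x => Real.exp (d • x)).sum = (t.map fun x => Real.exp (d • x)).sum) :
    s = t := by
  apply Multiset.map_injective Real.exp_injective
  apply multiset_eq_of_power_sums_eq
  simpa only [nsmul_eq_mul, Real.exp_nat_mul, Multiset.map_map, Function.comp_def] using h

theorem sum_exp_eq_iff_multiset_eq_general {E ι κ : Type*} [SMul ℕ E] [Fintype ι] [Fintype κ]
    {X : Set E} (hX : ∀ v ∈ X, ∀ d : ℕ, d • v ∈ X) (f : ι → E → ℝ) (g : κ → E → ℝ)
    (hf : ∀ i, ∀ v ∈ X, ∀ d : ℕ, f i (d • v) = d • f i v)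
    (hg : ∀ j, ∀ v ∈ X, ∀ d : ℕ, g j (d • v) = d • g j v) :
    ((∀ v ∈ X, (∑ i, Real.exp (f i v)) = ∑ j, Real.exp (g j v)) ↔
      ∀ v ∈ X, (Finset.univ.val.map fun i => f i v) = Finset.univ.val.map fun j => g j v) ∧
    (X.Nonempty → (∀ v ∈ X, (∑ i, Real.exp (f i v)) = ∑ j, Real.exp (g j v)) →
      Fintype.card ι = Fintype.card κ) := by
  have multiset_eq (h : ∀ v ∈ X, (∑ i, Real.exp (f i v)) = ∑ j, Real.exp (g j v)) (v : E)
      (hv : v ∈ X) :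
      (Finset.univ.val.map fun i => f i v) = Finset.univ.val.map fun j => g j v := by
    apply multiset_eq_of_sum_exp_nsmul_eq
    intro d
    have sum_eq := h (d • v) (hX v hv d)
    simp only [hf _ v hv, hg _ v hv] at sum_eq
    simpa only [Multiset.map_map, Function.comp_def, Finset.sum_map_val] using sum_eq
  refine ⟨⟨multiset_eq, fun h v hv => ?_⟩, fun ⟨v, hv⟩ h => ?_⟩
  · simpa only [Multiset.map_map, Function.comp_def, Finset.sum_map_val] using
      congrArg (fun s => (s.map Real.exp).sum) (h v hv)
  · simpa only [Multiset.card_map, Finset.card_val, Finset.card_univ] using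
      congrArg Multiset.card (multiset_eq h v hv)

section Homogeneity

variable {n : ℕ} {v : V n} {c : ℝ}

theorem pairR_smul (m : Fin n → ℤ) (c : ℝ) (v : V n) : pairR m (c • v) = c • pairR m v :=
  dotProduct_smul c (fun i => (m i : ℝ)) v

theorem IsRationalCone.smul_mem {σ : Set (V n)} (hσ : IsRationalCone σ) (hc : 0 ≤ c)
    (hv : v ∈ σ) : c • v ∈ σ := by
  obtain ⟨s, rfl⟩ := hσ
  intro m hm
  rw [pairR_smul]
  exact smul_nonneg hc (hv m hm)

theorem RationalFan.mem_support {S : RationalFan n} : v ∈ S.support ↔ ∃ σ ∈ S.cones, v ∈ σ :=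
  Set.mem_iUnion₂.trans <| by simp only [exists_prop]

theorem RationalFan.smul_mem_support (S : RationalFan n) (hc : 0 ≤ c) (hv : v ∈ S.support) :
    c • v ∈ S.support := by
  obtain ⟨σ, hσ, hvσ⟩ := mem_support.mp hv
  exact mem_support.mpr ⟨σ, hσ, (S.rational σ hσ).smul_mem hc hvσ⟩

theorem IsPLFun.map_smul {S : RationalFan n} {φ : V n → ℝ} (hφ : IsPLFun S φ) (hc : 0 ≤ c)
    (hv : v ∈ S.support) : φ (c • v) = c • φ v := by
  obtain ⟨σ, hσ, hvσ⟩ := RationalFan.mem_support.mp hv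
  obtain ⟨m, hm⟩ := hφ σ hσ
  rw [hm _ ((S.rational σ hσ).smul_mem hc hvσ), hm v hvσ, pairR_smul]

theorem RationalFan.nsmul_mem_support (S : RationalFan n) (hv : v ∈ S.support) (d : ℕ) :
    d • v ∈ S.support := by
  simpa only [Nat.cast_smul_eq_nsmul] using S.smul_mem_support (Nat.cast_nonneg (α := ℝ) d) hv

theorem IsPLFun.map_nsmul {S : RationalFan n} {φ : V n → ℝ} (hφ : IsPLFun S φ)
    (hv : v ∈ S.support) (d : ℕ) : φ (d • v) = d • φ v := by
  simpa only [Nat.cast_smul_eq_nsmul] using hφ.map_smul (Nat.cast_nonneg (α := ℝ) d) hv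

end Homogeneity

/-- For PL functions `f₁,…,f_k, g₁,…,g_ℓ` on a rational fan `Σ`, the
equality `∑ᵢ e^{fᵢ} = ∑ⱼ e^{gⱼ}` of functions on `|Σ|` holds if and only if for every
`v ∈ |Σ|` the multisets `{fᵢ(v)}` and `{gⱼ(v)}` coincide; in particular (when the
support is nonempty) this forces `k = ℓ`. -/
theorem sum_exp_eq_iff_multiset_eq {n k l : ℕ} (S : RationalFan n)
    (f : Fin k → (V n → ℝ)) (g : Fin l → (V n → ℝ))
    (hf : ∀ i, IsPLFun S (f i)) (hg : ∀ j, IsPLFun S (g j)) :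
    ((∀ v ∈ S.support, (∑ i, Real.exp (f i v)) = ∑ j, Real.exp (g j v)) ↔
      (∀ v ∈ S.support,
        (Finset.univ.val.map fun i : Fin k => f i v)
          = (Finset.univ.val.map fun j : Fin l => g j v))) ∧
    (S.support.Nonempty →
      (∀ v ∈ S.support, (∑ i, Real.exp (f i v)) = ∑ j, Real.exp (g j v)) →
      k = l) := by
  simpa only [Fintype.card_fin] using
    sum_exp_eq_iff_multiset_eq_general (fun _ hv d => S.nsmul_mem_support hv d) f g
      (fun i _ hv d => (hf i).map_nsmul hv d) fun j _ hv d => (hg j).map_nsmul hv d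

end EhrhartFormalization
end

section
/- A one-dimensional unimodular fan Σ is Ehrhart if and only if the sum of its primitive ray generators vanishes: ∑_{ρ ∈ Σ(1)} u_ρ = 0. Moreover, if Σ is Ehrhart, then its Ehrhart polynomial is given by χ_Σ([f]) = 1 + ∑_{ρ ∈ Σ(1)} f(u_ρ) for every f ∈ PL(Σ). -/
open scoped BigOperators Pointwise

namespace EhrhartFormalization

/-!
A face of a cone that has the same dimension is the whole cone, so a ray of a one-dimensional fan is
a maximal cone and its star fan is a point, which has no rays and on which `χ = 1`. The recursion
therefore reads `χ f = χ (f - δ_ρ) + 1` and, together with `χ 0 = 1`, forces `χ f = 1 + ∑ f(u_ρ)`.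
This formula satisfies the recursion, and it is invariant under adding `m ∈ M` to `f` exactly when
`⟨m, ∑ u_ρ⟩ = 0`; requiring this for all `m` is the balancing condition `∑ u_ρ = 0`.
-/

section Development

open scoped NNReal AddConstMap

variable {n : ℕ}

/-- The `ℝ`-basis of `N_ℝ` obtained from a `ℤ`-basis of `N` by extension of scalars. -/
noncomputable def realBasis (b : Module.Basis (Fin n) ℤ (Fin n → ℤ)) :
    Module.Basis (Fin n) ℝ (V n) :=
  (b.baseChange ℝ).map (TensorProduct.piScalarRight ℤ ℝ ℝ (Fin n))

lemma piScalarRight_one_tmul (u : Fin n → ℤ) :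
    TensorProduct.piScalarRight ℤ ℝ ℝ (Fin n) (1 ⊗ₜ u) = toR u := by
  ext i
  simp [toR]

@[simp]
lemma realBasis_apply (b : Module.Basis (Fin n) ℤ (Fin n → ℤ)) (i : Fin n) :
    realBasis b i = toR (b i) := by
  rw [realBasis, Module.Basis.map_apply, Module.Basis.baseChange_apply, piScalarRight_one_tmul]

@[simp]
lemma realBasis_repr_toR (b : Module.Basis (Fin n) ℤ (Fin n → ℤ)) (u : Fin n → ℤ) (i : Fin n) :
    (realBasis b).repr (toR u) i = b.repr u i := by
  rw [realBasis, Module.Basis.map_repr, LinearEquiv.trans_apply, ← piScalarRight_one_tmul,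
    LinearEquiv.symm_apply_apply, Module.Basis.baseChange_repr_tmul, zsmul_one]

lemma exists_pairZ_basis_eq (b : Module.Basis (Fin n) ℤ (Fin n → ℤ)) (i : Fin n) (k : ℤ) :
    ∃ m, pairZ m (b i) = k := by
  obtain ⟨m, hm⟩ := (dotProductEquiv ℤ (Fin n)).surjective (k • b.coord i)
  exact ⟨m, (LinearMap.congr_fun hm (b i)).trans (by simp)⟩

lemma IsUnimodularCone.exists_eq_span {σ : Set (V n)} (h : IsUnimodularCone σ) :
    ∃ (b : Module.Basis (Fin n) ℤ (Fin n → ℤ)) (s : Set (Fin n)),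
      σ = Submodule.span ℝ≥0 ((fun i ↦ toR (b i)) '' s) := by
  obtain ⟨b, k, -, rfl⟩ := h
  refine ⟨b, {i | (i : ℕ) < k}, Set.ext fun v ↦ ⟨?_, fun hv ↦ ?_⟩⟩
  · rintro ⟨c, hc, hck, rfl⟩
    refine sum_mem fun i _ ↦ ?_
    by_cases hi : (i : ℕ) < k
    · exact Submodule.smul_mem _ (⟨c i, hc i⟩ : ℝ≥0) (Submodule.subset_span ⟨i, hi, rfl⟩)
    · simp [hck i (not_lt.1 hi)]
  · obtain ⟨c, hc, rfl⟩ := (Finsupp.mem_span_image_iff_linearCombination ℝ≥0).1 hv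
    refine ⟨fun i ↦ c i, fun i ↦ (c i).2, fun i hi ↦ ?_, ?_⟩
    · simpa using (Finsupp.mem_supported' _ c).1 hc i (not_lt.2 hi)
    · rw [Finsupp.linearCombination_apply, Finsupp.sum_fintype _ _ (by simp)]
      rfl

lemma dimCone_singleton_zero : dimCone ({0} : Set (V n)) = 0 := by
  rw [dimCone, Submodule.span_zero_singleton, finrank_bot]

lemma dimCone_span_image_basis (b : Module.Basis (Fin n) ℤ (Fin n → ℤ)) (s : Set (Fin n)) :
    dimCone (Submodule.span ℝ≥0 ((fun i ↦ toR (b i)) '' s) : Set (V n)) = s.ncard := by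
  classical
  have hli : LinearIndependent ℝ fun i : s ↦ toR (b i) := by
    simpa [Function.comp_def] using (realBasis b).linearIndependent.comp _ Subtype.val_injective
  rw [dimCone, Submodule.span_span_of_tower, Set.image_eq_range, finrank_span_eq_card hli,
    ← Nat.card_eq_fintype_card, Nat.card_coe_set_eq]

lemma IsUnimodularCone.exists_eq_span_singleton {ρ : Set (V n)} (h : IsUnimodularCone ρ)
    (hdim : dimCone ρ = 1) :
    ∃ (b : Module.Basis (Fin n) ℤ (Fin n → ℤ)) (i : Fin n),
      ρ = Submodule.span ℝ≥0 {toR (b i)} := by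
  obtain ⟨b, s, rfl⟩ := h.exists_eq_span
  obtain ⟨i, rfl⟩ := Set.ncard_eq_one.1 ((dimCone_span_image_basis b s).symm.trans hdim)
  exact ⟨b, i, by rw [Set.image_singleton]⟩

lemma IsRayGenOf.unique {ρ : Set (V n)} {u w : Fin n → ℤ} (hu : IsRayGenOf ρ u)
    (hw : IsRayGenOf ρ w) : u = w := by
  obtain ⟨c, hc⟩ := hw.2.2 u hu.1
  obtain ⟨d, hd⟩ := hu.2.2 w hw.1
  have hsmul : ((c * d : ℕ) : ℤ) • u = (1 : ℤ) • u := by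
    rw [natCast_zsmul, mul_smul, ← hd, ← hc, one_smul]
  have hcd : c * d = 1 := by exact_mod_cast smul_left_injective ℤ hu.2.1 hsmul
  rw [hd, Nat.eq_one_of_mul_eq_one_left hcd, one_smul]

lemma IsRayGenOf.rayGen_eq {ρ : Set (V n)} {u : Fin n → ℤ} (hu : IsRayGenOf ρ u) :
    rayGen ρ = u := by
  have hex : ∃ u, IsRayGenOf ρ u := ⟨u, hu⟩
  rw [rayGen, dif_pos hex]
  exact hex.choose_spec.unique hu

lemma isRayGenOf_span_singleton_basis (b : Module.Basis (Fin n) ℤ (Fin n → ℤ)) (i : Fin n) :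
    IsRayGenOf (Submodule.span ℝ≥0 {toR (b i)} : Set (V n)) (b i) := by
  refine ⟨Submodule.mem_span_singleton_self _, b.ne_zero i, fun w hw ↦ ?_⟩
  obtain ⟨c, hc⟩ := Submodule.mem_span_singleton.1 hw
  have hcoord (j : Fin n) : (b.repr w j : ℝ) = c * b.repr (b i) j := by
    rw [← realBasis_repr_toR, ← hc, NNReal.smul_def, map_smul, Finsupp.smul_apply,
      realBasis_repr_toR, smul_eq_mul]
  have hci : (b.repr w i : ℝ) = c := by simpa using hcoord i
  obtain ⟨k, hk⟩ := Int.eq_ofNat_of_zero_le (a := b.repr w i) (by exact_mod_cast hci.ge.trans' c.2)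
  refine ⟨k, b.ext_elem fun j ↦ ?_⟩
  have hj := hcoord j
  rw [← hci, hk] at hj
  rw [map_nsmul, Finsupp.smul_apply, nsmul_eq_mul]
  exact_mod_cast hj

lemma IsUnimodularCone.exists_pairZ_rayGen_eq {ρ : Set (V n)} (h : IsUnimodularCone ρ)
    (hdim : dimCone ρ = 1) (k : ℤ) : ∃ m, pairZ m (rayGen ρ) = k := by
  obtain ⟨b, i, rfl⟩ := h.exists_eq_span_singleton hdim
  rw [(isRayGenOf_span_singleton_basis b i).rayGen_eq]
  exact exists_pairZ_basis_eq b i k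

lemma IsRationalCone.zero_mem {σ : Set (V n)} (h : IsRationalCone σ) : (0 : V n) ∈ σ := by
  obtain ⟨s, rfl⟩ := h
  simp [pairR]

namespace RationalFan

variable {S : RationalFan n}

lemma dimCone_le_dim {σ : Set (V n)} (hσ : σ ∈ S.cones) : dimCone σ ≤ S.dim :=
  le_csSup (S.finite.image _).bddAbove ⟨σ, hσ, rfl⟩

-- A face of `σ` is cut out by a linear functional, which vanishes on all of `σ` as soon as
-- the face spans `span σ`.
lemma eq_of_subset_of_dimCone_le {ρ σ : Set (V n)} (hρ : ρ ∈ S.cones) (hσ : σ ∈ S.cones)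
    (hsub : ρ ⊆ σ) (hdim : dimCone σ ≤ dimCone ρ) : ρ = σ := by
  obtain ⟨m, -, hm⟩ := S.inter_face σ hσ ρ hρ
  rw [Set.inter_eq_self_of_subset_right hsub] at hm
  have hspan : Submodule.span ℝ ρ = Submodule.span ℝ σ :=
    Submodule.eq_of_le_of_finrank_le (Submodule.span_mono hsub) hdim
  have hker : Submodule.span ℝ ρ ≤ LinearMap.ker (dotProductEquiv ℝ (Fin n) (toR m)) :=
    Submodule.span_le.2 fun v hv ↦ (hm.subset hv).2
  exact hsub.antisymm fun v hv ↦
    hm.superset ⟨hv, hker (hspan.ge (Submodule.subset_span hv))⟩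

lemma nbhd_eq_of_dim_le {σ : Set (V n)} (hσ : σ ∈ S.cones) (hdim : S.dim ≤ dimCone σ) :
    S.nbhd σ = {τ | τ ∈ S.cones ∧ τ ⊆ σ} := by
  ext τ
  refine and_congr_right fun _ ↦ ⟨?_, fun hτσ ↦ ⟨σ, hσ, subset_rfl, hτσ⟩⟩
  rintro ⟨σ', hσ', hσσ', hτσ'⟩
  rwa [eq_of_subset_of_dimCone_le hσ hσ' hσσ' ((dimCone_le_dim hσ').trans hdim)]

lemma image_nbhd_of_dim_le {E : Type*} [AddCommMonoid E] [Module ℝ E] {σ : Set (V n)}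
    (hσ : σ ∈ S.cones) (hdim : S.dim ≤ dimCone σ) {π : V n →ₗ[ℝ] E}
    (hπ : Submodule.span ℝ σ ≤ LinearMap.ker π) :
    Set.image π '' S.nbhd σ = {{0}} := by
  have himage (τ : Set (V n)) (hτ : τ ∈ S.cones) (hτσ : τ ⊆ σ) : π '' τ = {0} :=
    Set.eq_singleton_iff_unique_mem.2
      ⟨⟨0, (S.rational τ hτ).zero_mem, map_zero π⟩,
        Set.forall_mem_image.2 fun v hv ↦ hπ (Submodule.subset_span (hτσ hv))⟩
  rw [nbhd_eq_of_dim_le hσ hdim]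
  exact Set.eq_singleton_iff_unique_mem.2
    ⟨⟨σ, ⟨hσ, subset_rfl⟩, himage σ hσ subset_rfl⟩,
      Set.forall_mem_image.2 fun τ hτ ↦ himage τ hτ.1 hτ.2⟩

lemma dim_le_dimCone_of_mem_rays (hdim : S.dim ≤ 1) {ρ : Set (V n)} (hρ : ρ ∈ S.rays) :
    S.dim ≤ dimCone ρ :=
  hdim.trans hρ.2.ge

lemma isEmpty_rays_of_cones_eq (hS : S.cones = {{0}}) : IsEmpty S.rays := by
  refine ⟨fun ⟨ρ, hρ, hdim⟩ ↦ ?_⟩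
  rw [hS, Set.mem_singleton_iff] at hρ
  rw [hρ, dimCone_singleton_zero] at hdim
  exact zero_ne_one hdim

instance (S : RationalFan 0) : IsEmpty S.rays :=
  ⟨fun ρ ↦ by simpa [dimCone, Module.finrank_zero_of_subsingleton] using ρ.2.2⟩

instance (S : RationalFan n) : Finite S.rays :=
  S.finite.subset fun _ h ↦ h.1

end RationalFan

open Classical in
lemma courant_eq_single (S : RationalFan n) (ρ : S.rays) : courant S ρ = Pi.single ρ 1 := by
  ext ρ'
  simp [courant, Pi.single_apply]

lemma finsum_courant (S : RationalFan n) (ρ : S.rays) : ∑ᶠ ρ', courant S ρ ρ' = 1 := by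
  exact (finsum_eq_single _ ρ fun _ hρ' ↦ if_neg hρ').trans (if_pos rfl)

lemma finsum_linPL (S : RationalFan n) (m : Fin n → ℤ) :
    ∑ᶠ ρ, linPL S m ρ = pairZ m (∑ᶠ ρ ∈ S.rays, rayGen ρ) := by
  rw [← finsum_set_coe_eq_finsum_mem]
  exact ((dotProductEquiv ℤ (Fin n) m).toAddMonoidHom.map_finsum (Set.toFinite _)).symm

/-- The fan in `N_ℝ` whose only cone is the origin. -/
def pointFan (n : ℕ) : RationalFan n where
  cones := {{0}}
  finite := Set.finite_singleton _
  rational := by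
    classical
    rintro _ rfl
    refine ⟨Finset.univ.image (Pi.single · 1) ∪ Finset.univ.image (Pi.single · (-1)), ?_⟩
    refine Set.Subset.antisymm (by simp [pairR]) fun v hv ↦ funext fun i ↦ ?_
    have hpos : 0 ≤ v i := by simpa [pairR, Pi.single_apply] using hv (Pi.single i 1) (by simp)
    have hneg : 0 ≤ -v i := by
      simpa [pairR, Pi.single_apply] using hv (Pi.single i (-1)) (by simp)
    exact le_antisymm (neg_nonneg.1 hneg) hpos
  face_mem := by
    rintro _ rfl _ ⟨m, -, rfl⟩
    simp [Set.ext_iff, pairR]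
  inter_face := by
    rintro _ rfl _ rfl
    exact ⟨0, by simp [pairR], by simp [pairR]⟩

lemma isUnimodular_pointFan (n : ℕ) : IsUnimodular (pointFan n) := by
  refine ⟨rfl, ?_⟩
  rintro _ rfl
  refine ⟨Pi.basisFun ℤ (Fin n), 0, n.zero_le, Set.Subset.antisymm ?_ ?_⟩
  · rintro _ rfl
    exact ⟨0, by simp⟩
  · rintro _ ⟨c, -, hc, rfl⟩
    simp [hc]

instance (n : ℕ) : IsEmpty (pointFan n).rays :=
  RationalFan.isEmpty_rays_of_cones_eq rfl

lemma ehrhartRec_pointFan : ∀ n : ℕ, EhrhartRec n (pointFan n) fun _ ↦ 1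
  | 0 => ⟨fun _ _ ↦ rfl, rfl⟩
  | _ + 1 => ⟨fun _ _ ↦ rfl, rfl, isEmptyElim⟩

/-- The projection of `N_ℝ` onto the coordinates other than the `i`-th one with respect to a
basis `b` of `N`; it realizes the quotient by the line through `b i`. -/
noncomputable def projAlong (b : Module.Basis (Fin (n + 1)) ℤ (Fin (n + 1) → ℤ))
    (i : Fin (n + 1)) : V (n + 1) →ₗ[ℝ] V n :=
  LinearMap.funLeft ℝ ℝ i.succAbove ∘ₗ (realBasis b).equivFun.toLinearMap

section projAlong

variable (b : Module.Basis (Fin (n + 1)) ℤ (Fin (n + 1) → ℤ)) (i : Fin (n + 1))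

lemma projAlong_apply (v : V (n + 1)) (j : Fin n) :
    projAlong b i v j = (realBasis b).repr v (i.succAbove j) :=
  rfl

lemma projAlong_toR (u : Fin (n + 1) → ℤ) :
    projAlong b i (toR u) = toR fun j ↦ b.repr u (i.succAbove j) := by
  ext j
  rw [projAlong_apply, realBasis_repr_toR, toR]

lemma projAlong_surjective : Function.Surjective (projAlong b i) :=
  (LinearMap.funLeft_surjective_of_injective ℝ ℝ _ Fin.succAbove_right_injective).comp
    (realBasis b).equivFun.surjective

lemma exists_projAlong_toR_eq (w : Fin n → ℤ) : ∃ u, projAlong b i (toR u) = toR w := by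
  refine ⟨b.equivFun.symm (i.insertNth 0 w), ?_⟩
  rw [projAlong_toR]
  congr! with j
  rw [← b.equivFun_apply, LinearEquiv.apply_symm_apply, Fin.insertNth_apply_succAbove]

lemma ker_projAlong : LinearMap.ker (projAlong b i) = Submodule.span ℝ {toR (b i)} := by
  refine le_antisymm (fun v hv ↦ ?_) ((Submodule.span_singleton_le_iff_mem _ _).2 ?_)
  · have hcoord (j : Fin n) : (realBasis b).repr v (i.succAbove j) = 0 :=
      congrFun (LinearMap.mem_ker.1 hv) j
    rw [← (realBasis b).sum_repr v, Fin.sum_univ_succAbove _ i]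
    simpa [hcoord] using
      Submodule.smul_mem _ ((realBasis b).repr v i) (Submodule.mem_span_singleton_self (toR (b i)))
  · rw [LinearMap.mem_ker, projAlong_toR]
    ext j
    simp [toR]

end projAlong

lemma IsUnimodular.exists_isStarMap_pointFan {S : RationalFan (n + 1)} (hS : IsUnimodular S)
    (hdim : S.dim ≤ 1) {ρ : Set (V (n + 1))} (hρ : ρ ∈ S.rays) :
    ∃ π, IsStarMap S ρ π (pointFan n) := by
  obtain ⟨b, i, hb⟩ := (hS.2 ρ hρ.1).exists_eq_span_singleton hρ.2
  have hker : LinearMap.ker (projAlong b i) = Submodule.span ℝ ρ := by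
    rw [ker_projAlong, hb, Submodule.span_span_of_tower]
  exact ⟨projAlong b i, projAlong_surjective b i, fun u ↦ ⟨_, projAlong_toR b i u⟩,
    exists_projAlong_toR_eq b i, hker,
    (RationalFan.image_nbhd_of_dim_le hρ.1
      (RationalFan.dim_le_dimCone_of_mem_rays hdim hρ) hker.ge).symm⟩

lemma map_eq_map_zero_add_sum_zsmul {ι H : Type*} [Fintype ι] [DecidableEq ι] [AddCommGroup H]
    {χ : (ι → ℤ) → H} {a : ι → H} (hχ : ∀ i f, χ (f + Pi.single i 1) = χ f + a i) (f : ι → ℤ) :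
    χ f = χ 0 + ∑ i, f i • a i := by
  have add_single (i : ι) (g : ι → ℤ) (k : ℤ) : χ (g + Pi.single i k) = χ g + k • a i := by
    simpa [← Pi.single_smul] using
      AddConstMapClass.map_add_zsmul (⟨χ, hχ i⟩ : (ι → ℤ) →+c[Pi.single i 1, a i] H) g k
  have partial_sum (s : Finset ι) :
      χ (∑ i ∈ s, Pi.single i (f i)) = χ 0 + ∑ i ∈ s, f i • a i := by
    induction s using Finset.cons_induction with
    | empty => simp
    | cons i s hi ih =>
      rw [Finset.sum_cons, Finset.sum_cons, add_comm, add_single, ih, add_assoc,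
        add_comm (f i • a i)]
  simpa [Finset.univ_sum_single] using partial_sum Finset.univ

namespace EhrhartRec

variable {S : RationalFan n} {χ : (S.rays → ℤ) → ℤ}

lemma map_zero (h : EhrhartRec n S χ) : χ 0 = 1 :=
  match n, S, χ, h with
  | 0, _, _, h => h.2
  | _ + 1, _, _, h => h.2.1

lemma map_add_linPL (h : EhrhartRec n S χ) (f : S.rays → ℤ) (m : Fin n → ℤ) :
    χ (f + linPL S m) = χ f :=
  match n, S, χ, h, f, m with
  | 0, _, _, h, f, m
  | _ + 1, _, _, h, f, m => h.1 f m

lemma map_eq_map_sub_courant_add_one (h : EhrhartRec n S χ) (hdim : S.dim ≤ 1) (ρ : S.rays)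
    (f : S.rays → ℤ) : χ f = χ (f - courant S ρ) + 1 := by
  cases n with
  | zero => exact isEmptyElim ρ
  | succ n =>
    obtain ⟨π, T, χT, ⟨-, -, -, hker, hT⟩, -, hχT, hrec⟩ := h.2.2 ρ
    obtain ⟨m₀, g, -, -, hf⟩ := hrec f
    rw [RationalFan.image_nbhd_of_dim_le ρ.2.1
      (RationalFan.dim_le_dimCone_of_mem_rays hdim ρ.2) hker.ge] at hT
    have := RationalFan.isEmpty_rays_of_cones_eq hT
    rw [hf, Subsingleton.elim g 0, hχT.map_zero]

theorem map_eq_one_add_finsum (h : EhrhartRec n S χ) (hdim : S.dim ≤ 1) (f : S.rays → ℤ) :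
    χ f = 1 + ∑ᶠ ρ, f ρ := by
  classical
  have := Fintype.ofFinite S.rays
  have hadd (ρ : S.rays) (f : S.rays → ℤ) : χ (f + Pi.single ρ 1) = χ f + 1 := by
    rw [h.map_eq_map_sub_courant_add_one hdim ρ, courant_eq_single, add_sub_cancel_right]
  rw [map_eq_map_zero_add_sum_zsmul hadd, h.map_zero, finsum_eq_sum_of_fintype]
  simp

theorem finsum_rayGen_eq_zero (h : EhrhartRec n S χ) (hdim : S.dim ≤ 1) :
    ∑ᶠ ρ ∈ S.rays, rayGen ρ = 0 := by
  refine dotProduct_eq_zero _ fun m ↦ ?_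
  have hinv : 1 + pairZ m (∑ᶠ ρ ∈ S.rays, rayGen ρ) = 1 := by
    rw [← finsum_linPL, ← h.map_eq_one_add_finsum hdim, ← zero_add (linPL S m),
      h.map_add_linPL, h.map_zero]
  rw [dotProduct_comm]
  exact left_eq_add.1 hinv.symm

end EhrhartRec

theorem IsUnimodular.ehrhartRec_one_add_finsum {S : RationalFan n} (hS : IsUnimodular S)
    (hdim : S.dim ≤ 1) (hsum : ∑ᶠ ρ ∈ S.rays, rayGen ρ = 0) :
    EhrhartRec n S fun f ↦ 1 + ∑ᶠ ρ, f ρ := by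
  have hinv (f : S.rays → ℤ) (m : Fin n → ℤ) :
      1 + ∑ᶠ ρ, (f + linPL S m) ρ = 1 + ∑ᶠ ρ, f ρ := by
    simp only [Pi.add_apply]
    rw [finsum_add_distrib (Set.toFinite _) (Set.toFinite _), finsum_linPL, hsum]
    simp [pairZ]
  have hrec (f : S.rays → ℤ) (ρ : S.rays) :
      1 + ∑ᶠ ρ', f ρ' = 1 + ∑ᶠ ρ', (f - courant S ρ) ρ' + 1 := by
    simp only [Pi.sub_apply]
    rw [finsum_sub_distrib (Set.toFinite _) (Set.toFinite _), finsum_courant]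
    ring
  cases n with
  | zero => exact ⟨hinv, by simp⟩
  | succ n =>
    refine ⟨hinv, by simp, fun ρ ↦ ?_⟩
    obtain ⟨π, hπ⟩ := hS.exists_isStarMap_pointFan hdim ρ.2
    refine ⟨π, pointFan n, fun _ ↦ 1, hπ, isUnimodular_pointFan n, ehrhartRec_pointFan n,
      fun f ↦ ?_⟩
    obtain ⟨m₀, hm₀⟩ := (hS.2 ρ ρ.2.1).exists_pairZ_rayGen_eq ρ.2.2 (f ρ)
    exact ⟨m₀, 0, hm₀, fun _ ↦ isEmptyElim, hrec f ρ⟩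

end Development

/-- **Statement 6.** A one-dimensional unimodular fan is Ehrhart if and only if the sum
of its primitive ray generators vanishes; in that case the Ehrhart polynomial is
`χ_Σ([f]) = 1 + ∑_{ρ ∈ Σ(1)} f(u_ρ)`. -/
theorem one_dimensional_ehrhart_iff {n : ℕ} (S : RationalFan n)
    (hS : IsUnimodular S) (hdim : S.dim = 1) :
    (IsEhrhart S ↔ (∑ᶠ ρ ∈ S.rays, rayGen ρ) = (0 : Fin n → ℤ)) ∧
    (IsEhrhart S →
      ∀ χ : (↥S.rays → ℤ) → ℤ, EhrhartRec n S χ →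
        ∀ f : ↥S.rays → ℤ, χ f = 1 + ∑ᶠ ρ : ↥S.rays, f ρ) := by
  refine ⟨⟨fun ⟨_, _, hχ⟩ ↦ hχ.finsum_rayGen_eq_zero hdim.le, fun hsum ↦ ?_⟩,
    fun _ _ hχ ↦ hχ.map_eq_one_add_finsum hdim.le⟩
  exact ⟨hS, _, hS.ehrhartRec_one_add_finsum hdim.le hsum⟩

end EhrhartFormalization
end

section
/- Let Σ be a complete unimodular fan in N_ℝ and f ∈ PL(Σ). For m ∈ M let Σ_{f,m} = {σ ∈ Σ : m(x) ≤ f(x) for all x ∈ σ}. Then there are only finitely many m ∈ M for which ∑_{σ ∈ Σ_{f,m}} (−1)^{dim σ} ≠ 0. -/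
open scoped BigOperators Pointwise

namespace EhrhartFormalization

/-- The subfan `Σ_{f,m} = {σ ∈ Σ : m(x) ≤ f(x) for all x ∈ σ}`. -/
def subfanLE {n : ℕ} (S : RationalFan n) (φ : V n → ℝ) (m : Fin n → ℤ) :
    Set (Set (V n)) :=
  {σ | σ ∈ S.cones ∧ ∀ x ∈ σ, pairR m x ≤ φ x}

/-!
Fix a vector `v` that lies in the span of no lower-dimensional cone. From a relative interior point
of a cone `τ` of `Σ`, the direction `v` leads into the interior of exactly one full-dimensional cone
`σ ⊇ τ`. Among the cones of `Σ_{f,m}` assigned to a fixed simplicial `σ` with rays `u_i`, the sets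
of rays form the Boolean interval from `{i | v_i < 0}` to `{i | (f - m)(u_i) ≥ 0}`, where `v_i` are
the coordinates of `v` with respect to the `u_i`. Its alternating sum vanishes unless both ends
agree, and in that case `f_σ(v) ≤ m(v)` for the linear extension `f_σ` of `f` from `σ`. Hence a
nonzero Euler sum forces `m(v) ≥ min_σ f_σ(v)`. Applying this to `v` and `-v` bounds `|m(v)|` for
all generic `v`, and generic vectors span `N_ℝ`, so only finitely many `m` remain.
-/

open Filter Topology

section BasisCone

variable {ι E : Type*} [AddCommGroup E] [Module ℝ E]

/-- The simplicial cone generated by the basis vectors `B i` with `i ∈ I`, described by the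
coordinates of its points with respect to the whole basis. -/
def basisCone (B : Module.Basis ι ℝ E) (I : Finset ι) : Set E :=
  {v | (∀ i, 0 ≤ B.repr v i) ∧ ∀ i ∉ I, B.repr v i = 0}

variable {B : Module.Basis ι ℝ E} {I J K : Finset ι} {v w : E} {i : ι}

lemma add_mem_basisCone (hv : v ∈ basisCone B I) (hw : w ∈ basisCone B I) :
    v + w ∈ basisCone B I := by
  refine ⟨fun i => ?_, fun i hi => ?_⟩
  · simpa using add_nonneg (hv.1 i) (hw.1 i)
  · simp [hv.2 i hi, hw.2 i hi]

lemma smul_mem_basisCone {c : ℝ} (hc : 0 ≤ c) (hv : v ∈ basisCone B I) :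
    c • v ∈ basisCone B I := by
  refine ⟨fun i => ?_, fun i hi => ?_⟩
  · simpa using mul_nonneg hc (hv.1 i)
  · simp [hv.2 i hi]

lemma self_mem_basisCone : B i ∈ basisCone B I ↔ i ∈ I := by
  classical
  refine ⟨fun h => by_contra fun hi => by simpa using h.2 i hi, fun hi => ⟨fun j => ?_, ?_⟩⟩
  · rw [B.repr_self_apply]
    split_ifs <;> norm_num
  · intro j hj
    rw [B.repr_self_apply, if_neg]
    rintro rfl
    exact hj hi

lemma basisCone_injective (B : Module.Basis ι ℝ E) : Function.Injective (basisCone B) :=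
  fun I J h => by ext i; rw [← self_mem_basisCone (B := B), h, self_mem_basisCone]

lemma basisCone_mono (h : I ⊆ J) : basisCone B I ⊆ basisCone B J :=
  fun _ hv => ⟨hv.1, fun i hi => hv.2 i (mt (@h i) hi)⟩

lemma mem_basisCone_univ [Fintype ι] : v ∈ basisCone B Finset.univ ↔ ∀ i, 0 ≤ B.repr v i := by
  simp [basisCone]

lemma sum_smul_mem_basisCone {c : ι → ℝ} (hc : ∀ i ∈ I, 0 ≤ c i) :
    ∑ i ∈ I, c i • B i ∈ basisCone B I :=
  Finset.sum_induction _ (· ∈ basisCone B I) (fun _ _ => add_mem_basisCone)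
    (by simp [basisCone]) fun i hi => smul_mem_basisCone (hc i hi) (self_mem_basisCone.2 hi)

lemma repr_sum_smul [DecidableEq ι] (B : Module.Basis ι ℝ E) (I : Finset ι) (c : ι → ℝ) (i : ι) :
    B.repr (∑ j ∈ I, c j • B j) i = if i ∈ I then c i else 0 := by
  simp [Finsupp.finsetSum_apply, Finsupp.single_apply]

lemma exists_mem_basisCone_pos (B : Module.Basis ι ℝ E) (I : Finset ι) :
    ∃ x ∈ basisCone B I, ∀ i ∈ I, 0 < B.repr x i := by
  classical
  refine ⟨_, sum_smul_mem_basisCone (c := 1) fun _ _ => zero_le_one, fun i hi => ?_⟩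
  rw [repr_sum_smul, if_pos hi]
  exact zero_lt_one

lemma span_basisCone (B : Module.Basis ι ℝ E) (I : Finset ι) :
    Submodule.span ℝ (basisCone B I) = Submodule.span ℝ (B '' I) := by
  refine le_antisymm (Submodule.span_le.2 fun v hv => ?_) (Submodule.span_mono ?_)
  · refine B.mem_span_image.2 fun i hi => ?_
    by_contra hiI
    exact Finsupp.mem_support_iff.1 hi (hv.2 i hiI)
  · rintro _ ⟨i, hi, rfl⟩
    exact self_mem_basisCone.2 hi

lemma finrank_span_basisCone (B : Module.Basis ι ℝ E) (I : Finset ι) :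
    Module.finrank ℝ (Submodule.span ℝ (basisCone B I)) = I.card := by
  classical
  rw [span_basisCone, ← Finset.coe_image, finrank_span_finset_eq_card,
    Finset.card_image_of_injective _ B.injective]
  rw [Finset.coe_image]
  exact (B.linearIndependent.linearIndepOn _).id_image

lemma apply_eq_sum_of_mem_basisCone (l : E →ₗ[ℝ] ℝ) (hv : v ∈ basisCone B I) :
    l v = ∑ i ∈ I, B.repr v i * l (B i) := by
  have hsupp : (B.repr v).support ⊆ I := fun i hi =>
    by_contra fun hiI => Finsupp.mem_support_iff.1 hi (hv.2 i hiI)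
  conv_lhs => rw [← B.linearCombination_repr v, Finsupp.linearCombination_apply,
    Finsupp.sum_of_support_subset _ hsupp _ (by simp)]
  simp only [map_sum, map_smul, smul_eq_mul]

lemma forall_mem_basisCone_nonneg_iff {l : E →ₗ[ℝ] ℝ} :
    (∀ v ∈ basisCone B I, 0 ≤ l v) ↔ ∀ i ∈ I, 0 ≤ l (B i) := by
  refine ⟨fun h i hi => h _ (self_mem_basisCone.2 hi), fun h v hv => ?_⟩
  rw [apply_eq_sum_of_mem_basisCone l hv]
  exact Finset.sum_nonneg fun i hi => mul_nonneg (hv.1 i) (h i hi)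

lemma apply_eq_zero_iff_of_mem_basisCone {l : E →ₗ[ℝ] ℝ} (hl : ∀ i ∈ I, 0 ≤ l (B i))
    (hv : v ∈ basisCone B I) : l v = 0 ↔ ∀ i ∈ I, B.repr v i = 0 ∨ l (B i) = 0 := by
  rw [apply_eq_sum_of_mem_basisCone l hv,
    Finset.sum_eq_zero_iff_of_nonneg fun i hi => mul_nonneg (hv.1 i) (hl i hi)]
  simp only [mul_eq_zero]

lemma basisCone_inter_ker {l : E →ₗ[ℝ] ℝ} (hl : ∀ i ∈ I, 0 ≤ l (B i)) :
    {v ∈ basisCone B I | l v = 0} = basisCone B {i ∈ I | l (B i) = 0} := by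
  ext v
  constructor
  · rintro ⟨hv, hlv⟩
    refine ⟨hv.1, fun i hi => ?_⟩
    by_cases hiI : i ∈ I
    · exact ((apply_eq_zero_iff_of_mem_basisCone hl hv).1 hlv i hiI).resolve_right
        fun h => hi (Finset.mem_filter.2 ⟨hiI, h⟩)
    · exact hv.2 i hiI
  · intro hv
    have hvI := basisCone_mono (Finset.filter_subset _ _) hv
    refine ⟨hvI, (apply_eq_zero_iff_of_mem_basisCone hl hvI).2 fun i _ => ?_⟩
    by_cases hi : l (B i) = 0
    · exact .inr hi
    · exact .inl (hv.2 i fun h => hi (Finset.mem_filter.1 h).2)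

section Halfspaces

variable {κ : Type*} {s : Finset κ} {l : κ → E →ₗ[ℝ] ℝ}

lemma exists_apply_eq_zero_and_ne_zero (hcone : basisCone B I = {v | ∀ k ∈ s, 0 ≤ l k v})
    (hv : v ∈ basisCone B I) (hi : B.repr v i = 0) : ∃ k ∈ s, l k v = 0 ∧ l k (B i) ≠ 0 := by
  by_contra! hs_zero
  have hmem : ∀ᶠ ε in 𝓝[>] (0 : ℝ), v - ε • B i ∈ basisCone B I := by
    rw [hcone] at hv ⊢
    refine (eventually_all_finset s).2 fun k hk => ?_
    simp only [map_sub, map_smul, smul_eq_mul]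
    rcases (hv k hk).eq_or_lt' with hlv | hlv
    · simp [hlv, hs_zero k hk hlv]
    · have hcont : Continuous fun ε : ℝ => l k v - ε * l k (B i) := by fun_prop
      have hpos := hcont.tendsto 0 |>.eventually (lt_mem_nhds (by simpa using hlv))
      exact (hpos.filter_mono nhdsWithin_le_nhds).mono fun _ => le_of_lt
  obtain ⟨ε, hε, hε_pos⟩ := (hmem.and self_mem_nhdsWithin).exists
  have hcoord : 0 ≤ -ε := by simpa [hi] using hε.1 i
  exact (neg_neg_of_pos hε_pos).not_ge hcoord

lemma exists_subset_sum_apply_eq_zero_iff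
    (hcone : basisCone B K = {v | ∀ k ∈ s, 0 ≤ l k v}) (hIK : I ⊆ K) :
    ∃ t ⊆ s, ∀ i ∈ K, ∑ k ∈ t, l k (B i) = 0 ↔ i ∈ I := by
  obtain ⟨x, hx, hx_pos⟩ := exists_mem_basisCone_pos B I
  have hnonneg (k) (hk : k ∈ s) (i) (hi : i ∈ K) : 0 ≤ l k (B i) :=
    (hcone ▸ self_mem_basisCone.2 hi : B i ∈ {v | ∀ k ∈ s, 0 ≤ l k v}) k hk
  -- Sum the functionals that vanish at a relative interior point `x` of the face.
  refine ⟨{k ∈ s | l k x = 0}, Finset.filter_subset _ _, fun i hi => ?_⟩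
  rw [Finset.sum_eq_zero_iff_of_nonneg fun k hk => hnonneg k (Finset.mem_filter.1 hk).1 i hi]
  simp only [Finset.mem_filter, and_imp]
  constructor
  · intro hvanish
    by_contra hiI
    obtain ⟨k, hk, hkx, hki⟩ :=
      exists_apply_eq_zero_and_ne_zero hcone (basisCone_mono hIK hx) (hx.2 i hiI)
    exact hki (hvanish k hk hkx)
  · intro hiI k hk hkx
    have hkI := apply_eq_zero_iff_of_mem_basisCone (fun j hj => hnonneg k hk j (hIK hj)) hx
    exact (hkI.1 hkx i hiI).resolve_left (hx_pos i hiI).ne'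

end Halfspaces

section Topology

variable [Fintype ι] [TopologicalSpace E] [IsTopologicalAddGroup E] [ContinuousSMul ℝ E] [T2Space E]

lemma basisCone_univ_eq_preimage :
    basisCone B Finset.univ = B.equivFunL ⁻¹' Set.univ.pi fun _ => Set.Ici 0 := by
  ext v
  simp [mem_basisCone_univ, Pi.le_def]

lemma mem_interior_basisCone_univ :
    v ∈ interior (basisCone B Finset.univ) ↔ ∀ i, 0 < B.repr v i := by
  rw [basisCone_univ_eq_preimage, ← B.equivFunL.coe_toHomeomorph, ← Homeomorph.preimage_interior,
    interior_pi_set Set.finite_univ]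
  simp

end Topology

end BasisCone

lemma sum_Icc_neg_one_pow_card {ι : Type*} [DecidableEq ι] {N A : Finset ι} (h : N ≠ A) :
    ∑ I ∈ Finset.Icc N A, (-1 : ℤ) ^ I.card = 0 := by
  by_cases hNA : N ⊆ A
  · have hne : (A \ N).Nonempty :=
      Finset.sdiff_nonempty.2 fun hAN => h (hNA.antisymm hAN)
    have hdisj : ∀ I ∈ (A \ N).powerset, Disjoint N I := fun I hI =>
      Finset.disjoint_sdiff.mono_right (Finset.mem_powerset.1 hI)
    calc ∑ I ∈ Finset.Icc N A, (-1 : ℤ) ^ I.card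
        = ∑ I ∈ (A \ N).powerset, (-1) ^ (N ∪ I).card := by
          rw [Finset.Icc_eq_image_powerset hNA, Finset.sum_image]
          intro I hI J hJ (hIJ : N ∪ I = N ∪ J)
          rw [← Finset.union_sdiff_cancel_left (hdisj I hI), hIJ,
            Finset.union_sdiff_cancel_left (hdisj J hJ)]
      _ = (-1) ^ N.card * ∑ I ∈ (A \ N).powerset, (-1) ^ I.card := by
          rw [Finset.mul_sum]
          refine Finset.sum_congr rfl fun I hI => ?_
          rw [Finset.card_union_of_disjoint (hdisj I hI), pow_add]
      _ = 0 := by rw [Finset.sum_powerset_neg_one_pow_card_of_nonempty hne, mul_zero]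
  · rw [Finset.Icc_eq_empty hNA, Finset.sum_empty]

section Pairing

variable {n : ℕ}

/-- The inclusion of the lattice `N = ℤⁿ` into `N_ℝ`, as a homomorphism; it is `toR`. -/
def latticeInclusion (n : ℕ) : (Fin n → ℤ) →+ V n := (Int.castAddHom ℝ).compLeft (Fin n)

/-- The functional on `N_ℝ` given by `m ∈ M`, additively in `m`; its values are `pairR m v`. -/
def pairing (n : ℕ) : (Fin n → ℤ) →+ (V n →ₗ[ℝ] ℝ) :=
  (dotProductEquiv ℝ (Fin n)).toAddMonoidHom.comp (latticeInclusion n)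

lemma pairing_apply (m : Fin n → ℤ) (v : V n) : pairing n m v = pairR m v := rfl

lemma pairing_single (m : Fin n → ℤ) (j : Fin n) : pairing n m (Pi.single j 1) = m j := by
  simp [pairing_apply, pairR, Pi.single_apply]

lemma span_range_toR_basis (b : Module.Basis (Fin n) ℤ (Fin n → ℤ)) :
    Submodule.span ℝ (Set.range fun i => toR (b i)) = ⊤ := by
  have toR_mem (u : Fin n → ℤ) : toR u ∈ Submodule.span ℝ (Set.range fun i => toR (b i)) := by
    change latticeInclusion n u ∈ _
    rw [← b.sum_repr u, map_sum]
    refine Submodule.sum_mem _ fun i _ => ?_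
    rw [map_zsmul]
    exact zsmul_mem (Submodule.subset_span (Set.mem_range_self (f := fun i => toR (b i)) i)) _
  rw [eq_top_iff, ← (Pi.basisFun ℝ (Fin n)).span_eq, Submodule.span_le]
  rintro _ ⟨j, rfl⟩
  have hj : Pi.basisFun ℝ (Fin n) j = toR (Pi.single j 1) := by
    ext i
    simp [toR, Pi.single_apply]
  exact hj ▸ toR_mem _

lemma finite_of_forall_abs_pairing_le {T : Set (Fin n → ℤ)}
    (hT : ∀ v, ∃ C, ∀ m ∈ T, |pairing n m v| ≤ C) : T.Finite := by
  choose C hC using hT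
  let c (j : Fin n) : ℝ := C (Pi.single j 1)
  refine (Set.finite_Icc (fun j => ⌈-c j⌉) fun j => ⌊c j⌋).subset fun m hm => ?_
  have hm_abs (j : Fin n) : |(m j : ℝ)| ≤ c j := pairing_single m j ▸ hC _ m hm
  exact ⟨fun j => Int.ceil_le.2 (abs_le.1 (hm_abs j)).1,
    fun j => Int.le_floor.2 (abs_le.1 (hm_abs j)).2⟩

end Pairing

section Faces

variable {n : ℕ} {ι : Type*} {B : Module.Basis ι ℝ (V n)} {I K : Finset ι}

lemma IsRationalCone.isClosed {σ : Set (V n)} (hσ : IsRationalCone σ) : IsClosed σ := by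
  obtain ⟨s, rfl⟩ := hσ
  simp only [Set.ofPred_forall]
  exact isClosed_biInter fun m _ =>
    isClosed_Ici.preimage (pairing n m).continuous_of_finiteDimensional

lemma IsFaceOf.exists_eq_basisCone {τ : Set (V n)} (h : IsFaceOf τ (basisCone B K)) :
    ∃ I ⊆ K, τ = basisCone B I := by
  obtain ⟨m, hm, rfl⟩ := h
  have hgen : ∀ i ∈ K, 0 ≤ (-pairing n m) (B i) := fun i hi =>
    neg_nonneg.2 (hm _ (self_mem_basisCone.2 hi))
  refine ⟨{i ∈ K | (-pairing n m) (B i) = 0}, Finset.filter_subset _ _, ?_⟩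
  rw [← basisCone_inter_ker hgen]
  simp only [LinearMap.neg_apply, neg_eq_zero, pairing_apply]

lemma isFaceOf_basisCone (hK : IsRationalCone (basisCone B K)) (hIK : I ⊆ K) :
    IsFaceOf (basisCone B I) (basisCone B K) := by
  obtain ⟨s, hs⟩ := hK
  obtain ⟨t, hts, ht⟩ := exists_subset_sum_apply_eq_zero_iff (l := pairing n) hs hIK
  have hsum (v : V n) : pairing n (∑ m ∈ t, m) v = ∑ m ∈ t, pairing n m v := by
    rw [map_sum, LinearMap.sum_apply]
  have hneg (v : V n) : pairR (-∑ m ∈ t, m) v = -∑ m ∈ t, pairing n m v := by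
    rw [← pairing_apply, map_neg, LinearMap.neg_apply, hsum]
  have hnonneg (v) (hv : v ∈ basisCone B K) : 0 ≤ ∑ m ∈ t, pairing n m v :=
    Finset.sum_nonneg fun m hm =>
      (hs ▸ hv : v ∈ {v | ∀ m ∈ s, 0 ≤ pairR m v}) m (hts hm)
  refine ⟨-∑ m ∈ t, m, fun v hv => ?_, ?_⟩
  · rw [hneg]
    exact neg_nonpos.2 (hnonneg v hv)
  · have hgen : ∀ i ∈ K, 0 ≤ pairing n (∑ m ∈ t, m) (B i) := fun i hi =>
      hsum (B i) ▸ hnonneg _ (self_mem_basisCone.2 hi)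
    have hI : {i ∈ K | pairing n (∑ m ∈ t, m) (B i) = 0} = I := by
      ext i
      rw [Finset.mem_filter, hsum]
      exact ⟨fun h => (ht i h.1).1 h.2, fun h => ⟨hIK h, (ht i (hIK h)).2 h⟩⟩
    have hker := basisCone_inter_ker hgen
    rw [hI] at hker
    simp only [hneg, neg_eq_zero, ← hker, hsum]

end Faces

section Simplicial

variable {n : ℕ} {S : RationalFan n} {σ τ : Set (V n)}

/-- A simplicial cone: generated by part of an `ℝ`-basis of `N_ℝ`. -/
def IsSimplicialCone (σ : Set (V n)) : Prop :=
  ∃ (B : Module.Basis (Fin n) ℝ (V n)) (K : Finset (Fin n)), σ = basisCone B K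

/-- A simplicial fan: all of its cones are simplicial. -/
def IsSimplicial (S : RationalFan n) : Prop := ∀ σ ∈ S.cones, IsSimplicialCone σ

lemma IsUnimodularCone.isSimplicialCone (h : IsUnimodularCone σ) : IsSimplicialCone σ := by
  obtain ⟨b, k, -, rfl⟩ := h
  let B := basisOfTopLeSpanOfCardEqFinrank (fun i => toR (b i)) (span_range_toR_basis b).ge
    (by simp)
  have hB (i) : B i = toR (b i) := by simp [B]
  refine ⟨B, ({i | i.val < k} : Finset (Fin n)), Set.ext fun v => ?_⟩
  simp only [← hB]
  constructor
  · rintro ⟨c, hc, hck, rfl⟩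
    have hrepr (i) : B.repr (∑ j, c j • B j) i = c i := by
      simp only [repr_sum_smul, Finset.mem_univ, if_true]
    exact ⟨fun i => hrepr i ▸ hc i, fun i hi => (hrepr i).trans (hck i (by simpa using hi))⟩
  · intro hv
    exact ⟨B.repr v, hv.1, fun i hi => hv.2 i (by simpa using hi), (B.sum_repr v).symm⟩

lemma IsUnimodular.isSimplicial (hS : IsUnimodular S) : IsSimplicial S :=
  fun σ hσ => (hS.2 σ hσ).isSimplicialCone

lemma IsSimplicialCone.exists_eq_basisCone_univ (hσ : IsSimplicialCone σ)
    (hspan : Submodule.span ℝ σ = ⊤) :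
    ∃ B : Module.Basis (Fin n) ℝ (V n), σ = basisCone B Finset.univ := by
  obtain ⟨B, K, rfl⟩ := hσ
  rw [span_basisCone] at hspan
  have hK : K = Finset.univ := Finset.eq_univ_of_forall fun i =>
    B.self_mem_span_image.1 (hspan ▸ Submodule.mem_top)
  exact ⟨B, hK ▸ rfl⟩

namespace RationalFan

variable {B : Module.Basis (Fin n) ℝ (V n)} {I K : Finset (Fin n)}

lemma basisCone_mem_cones (hK : basisCone B K ∈ S.cones) (hIK : I ⊆ K) :
    basisCone B I ∈ S.cones :=
  S.face_mem _ hK _ (isFaceOf_basisCone (S.rational _ hK) hIK)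

lemma exists_eq_basisCone_of_subset (hτ : τ ∈ S.cones) (hK : basisCone B K ∈ S.cones)
    (hτK : τ ⊆ basisCone B K) : ∃ I ⊆ K, τ = basisCone B I := by
  have hface := S.inter_face _ hK _ hτ
  rw [Set.inter_eq_right.2 hτK] at hface
  exact hface.exists_eq_basisCone

lemma basisCone_subset_of_mem {x : V n} (hK : basisCone B K ∈ S.cones) (hσ : σ ∈ S.cones)
    (hx : x ∈ basisCone B K) (hx_pos : ∀ i ∈ K, 0 < B.repr x i) (hxσ : x ∈ σ) :
    basisCone B K ⊆ σ := by
  obtain ⟨I, hIK, hI⟩ := (S.inter_face _ hK _ hσ).exists_eq_basisCone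
  have hxI : x ∈ basisCone B I := hI ▸ ⟨hx, hxσ⟩
  have hKI : K ⊆ I := fun i hi => by_contra fun hiI => (hx_pos i hi).ne' (hxI.2 i hiI)
  rw [← Set.inter_eq_left, hI, hIK.antisymm hKI]

end RationalFan

end Simplicial

section Generic

variable {n : ℕ} {S : RationalFan n} {v : V n}

/-- A vector is generic for a fan if it lies in the span of no lower-dimensional cone. -/
def IsGeneric (S : RationalFan n) (v : V n) : Prop :=
  ∀ τ ∈ S.cones, Submodule.span ℝ τ ≠ ⊤ → v ∉ Submodule.span ℝ τ

lemma IsGeneric.neg (hv : IsGeneric S v) : IsGeneric S (-v) :=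
  fun τ hτ hspan h => hv τ hτ hspan (neg_mem_iff.1 h)

lemma exists_isGeneric_notMem (S : RationalFan n) {W : Submodule ℝ (V n)} (hW : W ≠ ⊤) :
    ∃ v ∉ W, IsGeneric S v := by
  classical
  let spans : Finset (Submodule ℝ (V n)) :=
    {U ∈ S.finite.toFinset.image (Submodule.span ℝ) | U ≠ ⊤}
  have hne := Subspace.biUnion_ne_univ_of_top_notMem (s := insert W spans)
    (by simp [spans, hW.symm])
  obtain ⟨v, hv⟩ := (Set.ne_univ_iff_exists_notMem _).1 hne
  simp only [Set.mem_iUnion₂, not_exists] at hv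
  refine ⟨v, hv W (Finset.mem_insert_self _ _), fun τ hτ hspan => hv _ ?_⟩
  refine Finset.mem_insert_of_mem (Finset.mem_filter.2 ⟨?_, hspan⟩)
  exact Finset.mem_image_of_mem _ (S.finite.mem_toFinset.2 hτ)

lemma IsGeneric.repr_ne_zero {B : Module.Basis (Fin n) ℝ (V n)} (hv : IsGeneric S v)
    (hB : basisCone B Finset.univ ∈ S.cones) (i : Fin n) : B.repr v i ≠ 0 := by
  intro hi
  have hmem : v ∈ Submodule.span ℝ (basisCone B (Finset.univ.erase i)) := by
    rw [span_basisCone, B.mem_span_image]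
    intro j hj
    have hji : j ≠ i := by
      rintro rfl
      exact Finsupp.mem_support_iff.1 hj hi
    simpa using hji
  refine hv _ (S.basisCone_mem_cones hB (Finset.subset_univ _)) (fun htop => ?_) hmem
  have hiB : B i ∈ Submodule.span ℝ (basisCone B (Finset.univ.erase i)) :=
    htop ▸ Submodule.mem_top
  rw [span_basisCone] at hiB
  simpa using B.self_mem_span_image.1 hiB

end Generic

section PointsInto

variable {n : ℕ} {S : RationalFan n} {v : V n} {σ σ' τ : Set (V n)}

/-- The vector `v` points from the face `τ` of `σ` into `σ`: it leads from some point of `τ` to an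
interior point of `σ`. Each cone of a complete simplicial fan is thus assigned to the unique
full-dimensional cone into which a given generic vector points. -/
def PointsInto (v : V n) (τ σ : Set (V n)) : Prop :=
  τ ⊆ σ ∧ ∃ x ∈ τ, x + v ∈ interior σ

lemma PointsInto.span_eq_top (h : PointsInto v τ σ) : Submodule.span ℝ σ = ⊤ := by
  obtain ⟨-, x, -, hx⟩ := h
  exact Submodule.eq_top_of_nonempty_interior' _ ⟨_, interior_mono Submodule.subset_span hx⟩

lemma pointsInto_basisCone_iff {B : Module.Basis (Fin n) ℝ (V n)} {I : Finset (Fin n)}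
    (hv : ∀ i, B.repr v i ≠ 0) :
    PointsInto v (basisCone B I) (basisCone B Finset.univ) ↔ ∀ i, B.repr v i < 0 → i ∈ I := by
  simp only [PointsInto, mem_interior_basisCone_univ, map_add, Finsupp.add_apply]
  constructor
  · rintro ⟨-, x, hx, hxv⟩ i hi
    by_contra hiI
    have hpos := hxv i
    rw [hx.2 i hiI, zero_add] at hpos
    exact hpos.not_gt hi
  · intro hI
    refine ⟨basisCone_mono (Finset.subset_univ I), ∑ i ∈ I, (|B.repr v i| + 1) • B i,
      sum_smul_mem_basisCone fun i _ => by positivity, fun i => ?_⟩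
    rw [repr_sum_smul]
    split_ifs with hi
    · linarith [neg_abs_le (B.repr v i)]
    · rw [zero_add]
      exact (hv i).lt_or_gt.resolve_left (mt (hI i) hi)

lemma PointsInto.subset (hS : IsSimplicial S) (hσ : σ ∈ S.cones) (hσ' : σ' ∈ S.cones)
    (h : PointsInto v τ σ) (h' : PointsInto v τ σ') : σ ⊆ σ' := by
  obtain ⟨B, rfl⟩ := (hS σ hσ).exists_eq_basisCone_univ h.span_eq_top
  obtain ⟨B', rfl⟩ := (hS σ' hσ').exists_eq_basisCone_univ h'.span_eq_top
  obtain ⟨hτ, x, hx, hxv⟩ := h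
  obtain ⟨hτ', x', hx', hxv'⟩ := h'
  have hpos : ∀ i, 0 < B.repr (x' + (x + v)) i := fun i => by
    simpa using add_pos_of_nonneg_of_pos ((hτ hx').1 i) (mem_interior_basisCone_univ.1 hxv i)
  have hmem' : x' + (x + v) ∈ basisCone B' Finset.univ := by
    rw [add_left_comm]
    exact add_mem_basisCone (hτ' hx) (interior_subset hxv')
  exact RationalFan.basisCone_subset_of_mem hσ hσ' (mem_basisCone_univ.2 fun i => (hpos i).le)
    (fun i _ => hpos i) hmem'

lemma PointsInto.unique (hS : IsSimplicial S) (hσ : σ ∈ S.cones) (hσ' : σ' ∈ S.cones)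
    (h : PointsInto v τ σ) (h' : PointsInto v τ σ') : σ = σ' :=
  (h.subset hS hσ hσ' h').antisymm (h'.subset hS hσ' hσ h)

lemma exists_add_smul_mem_cone (hc : IsComplete S) (x v : V n) :
    ∃ σ ∈ S.cones, x ∈ σ ∧ ∃ ε > (0 : ℝ), x + ε • v ∈ σ := by
  have hcover (y : V n) : ∃ σ ∈ S.cones, y ∈ σ := by
    simpa [RationalFan.support] using (hc ▸ Set.mem_univ y : y ∈ S.support)
  have hfreq : ∃ᶠ ε in 𝓝[>] (0 : ℝ), ∃ σ ∈ S.cones, x + ε • v ∈ σ :=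
    (Eventually.of_forall fun ε => hcover (x + ε • v)).frequently
  obtain ⟨σ, hσ, hσ_freq⟩ := (frequently_exists_finite S.finite).1 hfreq
  have hlim : Tendsto (fun ε : ℝ => x + ε • v) (𝓝[>] 0) (𝓝 x) := by
    have hcont : Continuous fun ε : ℝ => x + ε • v := by fun_prop
    simpa using (hcont.tendsto 0).mono_left nhdsWithin_le_nhds
  have hx := (S.rational σ hσ).isClosed.mem_of_frequently_of_tendsto hσ_freq hlim
  obtain ⟨ε, hε, hε_pos⟩ := (hσ_freq.and_eventually self_mem_nhdsWithin).exists
  exact ⟨σ, hσ, hx, ε, hε_pos, hε⟩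

lemma exists_pointsInto (hS : IsSimplicial S) (hc : IsComplete S) (hv : IsGeneric S v)
    (hτ : τ ∈ S.cones) : ∃ σ ∈ S.cones, PointsInto v τ σ := by
  obtain ⟨B₀, K, rfl⟩ := hS τ hτ
  obtain ⟨x, hx, hx_pos⟩ := exists_mem_basisCone_pos B₀ K
  obtain ⟨σ, hσ, hxσ, ε, hε, hxεσ⟩ := exists_add_smul_mem_cone hc x v
  have hτσ := RationalFan.basisCone_subset_of_mem hτ hσ hx hx_pos hxσ
  have hv_span : v ∈ Submodule.span ℝ σ := by
    have hsub := sub_mem (Submodule.subset_span hxεσ) (Submodule.subset_span (R := ℝ) hxσ)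
    rwa [add_sub_cancel_left, Submodule.smul_mem_iff _ hε.ne'] at hsub
  obtain ⟨B, rfl⟩ := (hS σ hσ).exists_eq_basisCone_univ
    (by_contra fun hspan => hv σ hσ hspan hv_span)
  obtain ⟨I, -, hI⟩ := RationalFan.exists_eq_basisCone_of_subset hτ hσ hτσ
  rw [hI] at hx ⊢
  refine ⟨_, hσ, (pointsInto_basisCone_iff (hv.repr_ne_zero hσ)).2 fun i hi => ?_⟩
  by_contra hiI
  have hcoord := hxεσ.1 i
  simp only [map_add, map_smul, Finsupp.add_apply, Finsupp.smul_apply, hx.2 i hiI, zero_add,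
    smul_eq_mul] at hcoord
  exact (mul_neg_of_pos_of_neg hε hi).not_ge hcoord

end PointsInto

section NonnegSubfan

variable {n : ℕ} {S : RationalFan n} {ψ : V n → ℝ} {v : V n}

/-- The subfan of cones on which `ψ` is nonnegative; `Σ_{f,m}` is the case `ψ = f - m`. -/
def nonnegSubfan (S : RationalFan n) (ψ : V n → ℝ) : Set (Set (V n)) :=
  {σ ∈ S.cones | ∀ x ∈ σ, 0 ≤ ψ x}

/-- The Euler sum `∑ (-1) ^ dim σ` over a set of cones. It is `0` by convention when the set is
infinite, which does not happen for subsets of a fan. -/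
noncomputable def eulerSum (T : Set (Set (V n))) : ℤ := ∑ᶠ σ ∈ T, (-1) ^ dimCone σ

lemma subfanLE_eq_nonnegSubfan (S : RationalFan n) (φ : V n → ℝ) (m : Fin n → ℤ) :
    subfanLE S φ m = nonnegSubfan S (φ - pairing n m) := by
  simp only [subfanLE, nonnegSubfan, Pi.sub_apply, sub_nonneg, pairing_apply]

lemma eulerSum_image_basisCone (B : Module.Basis (Fin n) ℝ (V n))
    (𝓘 : Finset (Finset (Fin n))) :
    eulerSum (basisCone B '' 𝓘) = ∑ I ∈ 𝓘, (-1) ^ I.card := by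
  rw [eulerSum, finsum_mem_image (basisCone_injective B).injOn, finsum_mem_coe_finset]
  simp only [dimCone, finrank_span_basisCone]

lemma nonnegSubfan_pointsInto_eq_image_Icc {B : Module.Basis (Fin n) ℝ (V n)}
    (hB : basisCone B Finset.univ ∈ S.cones) (hv : ∀ i, B.repr v i ≠ 0) {l : V n →ₗ[ℝ] ℝ}
    (hl : Set.EqOn ψ l (basisCone B Finset.univ)) :
    {τ ∈ nonnegSubfan S ψ | PointsInto v τ (basisCone B Finset.univ)} =
      basisCone B ''
        ↑(Finset.Icc (α := Finset (Fin n)) {i | B.repr v i < 0} {i | 0 ≤ l (B i)}) := by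
  have hIcc (I : Finset (Fin n)) :
      I ∈ Finset.Icc (α := Finset (Fin n)) {i | B.repr v i < 0} {i | 0 ≤ l (B i)} ↔
        (∀ i, B.repr v i < 0 → i ∈ I) ∧ ∀ i ∈ I, 0 ≤ l (B i) := by
    simp [Finset.subset_iff]
  have hnonneg (I : Finset (Fin n)) :
      (∀ x ∈ basisCone B I, 0 ≤ ψ x) ↔ ∀ i ∈ I, 0 ≤ l (B i) := by
    rw [← forall_mem_basisCone_nonneg_iff]
    exact forall₂_congr fun x hx => by rw [hl (basisCone_mono (Finset.subset_univ I) hx)]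
  ext τ
  simp only [Set.mem_image, Finset.mem_coe, hIcc]
  constructor
  · rintro ⟨⟨hτ, hτψ⟩, hτv⟩
    obtain ⟨I, -, rfl⟩ := RationalFan.exists_eq_basisCone_of_subset hτ hB hτv.1
    exact ⟨I, ⟨(pointsInto_basisCone_iff hv).1 hτv, (hnonneg I).1 hτψ⟩, rfl⟩
  · rintro ⟨I, ⟨hvI, hlI⟩, rfl⟩
    exact ⟨⟨S.basisCone_mem_cones hB (Finset.subset_univ I), (hnonneg I).2 hlI⟩,
      (pointsInto_basisCone_iff hv).2 hvI⟩

lemma apply_nonpos_of_eulerSum_pointsInto_ne_zero {σ : Set (V n)} (hS : IsSimplicial S)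
    (hσ : σ ∈ S.cones) (hv : IsGeneric S v) {l : V n →ₗ[ℝ] ℝ} (hl : Set.EqOn ψ l σ)
    (h : eulerSum {τ ∈ nonnegSubfan S ψ | PointsInto v τ σ} ≠ 0) : l v ≤ 0 := by
  obtain ⟨τ, hτ, -⟩ := exists_ne_zero_of_finsum_mem_ne_zero h
  obtain ⟨B, rfl⟩ := (hS σ hσ).exists_eq_basisCone_univ hτ.2.span_eq_top
  rw [nonnegSubfan_pointsInto_eq_image_Icc hσ (hv.repr_ne_zero hσ) hl,
    eulerSum_image_basisCone] at h
  have hsigns := of_not_not (mt sum_Icc_neg_one_pow_card h)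
  rw [← B.sum_repr v, map_sum]
  refine Finset.sum_nonpos fun i _ => ?_
  have hi : B.repr v i < 0 ↔ 0 ≤ l (B i) := by simpa using Finset.ext_iff.1 hsigns i
  rw [map_smul, smul_eq_mul]
  rcases lt_or_ge (B.repr v i) 0 with hneg | hpos
  · exact mul_nonpos_of_nonpos_of_nonneg hneg.le (hi.1 hneg)
  · exact mul_nonpos_of_nonneg_of_nonpos hpos (not_le.1 (mt hi.2 hpos.not_gt)).le

lemma eulerSum_nonnegSubfan_eq_finsum (hS : IsSimplicial S) (hc : IsComplete S)
    (hv : IsGeneric S v) (ψ : V n → ℝ) :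
    eulerSum (nonnegSubfan S ψ) =
      ∑ᶠ σ ∈ S.cones, eulerSum {τ ∈ nonnegSubfan S ψ | PointsInto v τ σ} := by
  have hcover : nonnegSubfan S ψ =
      ⋃ σ ∈ S.cones, {τ ∈ nonnegSubfan S ψ | PointsInto v τ σ} := by
    ext τ
    simp only [Set.mem_iUnion₂]
    refine ⟨fun hτ => ?_, fun ⟨_, _, hτ, _⟩ => hτ⟩
    obtain ⟨σ, hσ, hτσ⟩ := exists_pointsInto hS hc hv hτ.1
    exact ⟨σ, hσ, hτ, hτσ⟩
  have hdisj : S.cones.PairwiseDisjoint fun σ => {τ ∈ nonnegSubfan S ψ | PointsInto v τ σ} :=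
    fun σ hσ σ' hσ' hne => Set.disjoint_left.2 fun τ hτ hτ' =>
      hne (hτ.2.unique hS hσ hσ' hτ'.2)
  conv_lhs => rw [hcover]
  exact finsum_mem_biUnion hdisj S.finite fun σ _ => S.finite.subset fun τ hτ => hτ.1.1

end NonnegSubfan

section Boundedness

variable {n : ℕ} {S : RationalFan n} {φ : V n → ℝ}

/-- A (real) piecewise-linear function on a fan. -/
def IsPiecewiseLinear (S : RationalFan n) (φ : V n → ℝ) : Prop :=
  ∀ σ ∈ S.cones, ∃ l : V n →ₗ[ℝ] ℝ, Set.EqOn φ l σ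

lemma IsPLFun.isPiecewiseLinear (hφ : IsPLFun S φ) : IsPiecewiseLinear S φ := fun σ hσ =>
  (hφ σ hσ).imp' (pairing n) fun _ hm => hm

/-- The subspace of vectors at which a family of linear functionals is bounded. -/
def boundedVectors {E : Type*} [AddCommGroup E] [Module ℝ E] (T : Set (E →ₗ[ℝ] ℝ)) :
    Submodule ℝ E where
  carrier := {x | ∃ C, ∀ ℓ ∈ T, |ℓ x| ≤ C}
  zero_mem' := ⟨0, by simp⟩
  add_mem' := by
    rintro x y ⟨C, hC⟩ ⟨D, hD⟩
    refine ⟨C + D, fun ℓ hℓ => ?_⟩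
    rw [map_add]
    exact (abs_add_le _ _).trans (add_le_add (hC ℓ hℓ) (hD ℓ hℓ))
  smul_mem' := by
    rintro a x ⟨C, hC⟩
    refine ⟨|a| * C, fun ℓ hℓ => ?_⟩
    rw [map_smul, smul_eq_mul, abs_mul]
    exact mul_le_mul_of_nonneg_left (hC ℓ hℓ) (abs_nonneg a)

lemma exists_le_apply_of_eulerSum_ne_zero (hS : IsSimplicial S) (hc : IsComplete S)
    (hφ : IsPiecewiseLinear S φ) {v : V n} (hv : IsGeneric S v) :
    ∃ C, ∀ ℓ : V n →ₗ[ℝ] ℝ, eulerSum (nonnegSubfan S (φ - ℓ)) ≠ 0 → C ≤ ℓ v := by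
  choose! l hl using hφ
  obtain ⟨C, hC⟩ := (S.finite.image fun σ => l σ v).bddBelow
  refine ⟨C, fun ℓ hℓ => ?_⟩
  rw [eulerSum_nonnegSubfan_eq_finsum hS hc hv] at hℓ
  obtain ⟨σ, hσ, hσ_sum⟩ := exists_ne_zero_of_finsum_mem_ne_zero hℓ
  have hle : (l σ - ℓ) v ≤ 0 :=
    apply_nonpos_of_eulerSum_pointsInto_ne_zero hS hσ hv (fun x hx => by simp [hl σ hσ hx]) hσ_sum
  exact (hC (Set.mem_image_of_mem _ hσ)).trans (sub_nonpos.1 hle)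

lemma boundedVectors_eulerSum_ne_zero (hS : IsSimplicial S) (hc : IsComplete S)
    (hφ : IsPiecewiseLinear S φ) :
    boundedVectors {ℓ : V n →ₗ[ℝ] ℝ | eulerSum (nonnegSubfan S (φ - ℓ)) ≠ 0} = ⊤ := by
  by_contra hne
  obtain ⟨v, hv_unbdd, hv⟩ := exists_isGeneric_notMem S hne
  obtain ⟨C, hC⟩ := exists_le_apply_of_eulerSum_ne_zero hS hc hφ hv
  obtain ⟨D, hD⟩ := exists_le_apply_of_eulerSum_ne_zero hS hc hφ hv.neg
  refine hv_unbdd ⟨max (-C) (-D), fun ℓ hℓ => abs_le'.2 ⟨?_, ?_⟩⟩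
  · have hle := hD ℓ hℓ
    rw [map_neg] at hle
    exact le_max_of_le_right (le_neg_of_le_neg hle)
  · exact le_max_of_le_left (neg_le_neg (hC ℓ hℓ))

end Boundedness

theorem finitely_many_nonzero_euler_sums_general {n : ℕ} (S : RationalFan n)
    (hS : IsSimplicial S) (hc : IsComplete S)
    (φ : V n → ℝ) (hφ : IsPiecewiseLinear S φ) :
    {m : Fin n → ℤ |
      (∑ᶠ σ ∈ subfanLE S φ m, (-1 : ℤ) ^ dimCone σ) ≠ 0}.Finite := by
  refine finite_of_forall_abs_pairing_le fun v => ?_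
  obtain ⟨C, hC⟩ : v ∈ boundedVectors {ℓ : V n →ₗ[ℝ] ℝ | eulerSum (nonnegSubfan S (φ - ℓ)) ≠ 0} :=
    boundedVectors_eulerSum_ne_zero hS hc hφ ▸ Submodule.mem_top
  refine ⟨C, fun m hm => hC (pairing n m) ?_⟩
  rwa [Set.mem_ofPred_eq, subfanLE_eq_nonnegSubfan] at hm

/-- **Statement 11.** For a complete unimodular fan `Σ` and `f ∈ PL(Σ)`, there are only
finitely many `m ∈ M` with `∑_{σ ∈ Σ_{f,m}} (-1)^{dim σ} ≠ 0`. -/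
theorem finitely_many_nonzero_euler_sums {n : ℕ} (S : RationalFan n)
    (hS : IsUnimodular S) (hc : IsComplete S)
    (φ : V n → ℝ) (hφ : IsPLFun S φ) :
    {m : Fin n → ℤ |
      (∑ᶠ σ ∈ subfanLE S φ m, (-1 : ℤ) ^ dimCone σ) ≠ 0}.Finite := by
  exact finitely_many_nonzero_euler_sums_general S hS.isSimplicial hc φ hφ.isPiecewiseLinear

end EhrhartFormalization
end
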